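/- Let ρ : G → GL₃(ℂ) be an irreducible 3-dimensional representation of a finite group whose projective image in PGL₃(ℂ) is isomorphic to PSL₂(𝔽₇). Then Ad(ρ), the 8-dimensional conjugation representation on trace-zero 3×3 matrices, is irreducible. -/

import Mathlib

open Matrix

section MatDefs

variable {G : Type*} [Group G] {n : ℕ}

/-- Irreducibility of a matrix representation `ρ : G →* GLₙ(ℂ)`. -/
def MatIrreducible (ρ : G →* GL (Fin n) ℂ) : Prop :=
  ∀ U : Submodule ℂ (Fin n → ℂ),
    (∀ g : G, ∀ v ∈ U, (ρ g : Matrix (Fin n) (Fin n) ℂ).mulVec v ∈ U) → U = ⊥ ∨ U = ⊤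

/-- Irreducibility of the adjoint `Ad ρ` of a matrix representation: the conjugation action
of `G` on the space of trace-zero `n × n` matrices is irreducible. -/
def MatAdIrreducible (ρ : G →* GL (Fin n) ℂ) : Prop :=
  LinearMap.ker (Matrix.traceLinearMap (Fin n) ℂ ℂ) ≠ ⊥ ∧
  ∀ U ≤ LinearMap.ker (Matrix.traceLinearMap (Fin n) ℂ ℂ),
    (∀ g : G, ∀ M ∈ U,
      (ρ g : Matrix (Fin n) (Fin n) ℂ) * M * ((ρ g)⁻¹ : GL (Fin n) ℂ) ∈ U) →
    U = ⊥ ∨ U = LinearMap.ker (Matrix.traceLinearMap (Fin n) ℂ ℂ)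

/-- The image of a matrix representation in `PGLₙ(ℂ)`. -/
def projImage (ρ : G →* GL (Fin n) ℂ) : Subgroup (GL (Fin n) ℂ ⧸ Subgroup.center (GL (Fin n) ℂ)) :=
  ((QuotientGroup.mk' (Subgroup.center (GL (Fin n) ℂ))).comp ρ).range

end MatDefs

/-!
Let `U` be a conjugation-invariant space of trace-zero matrices, and let `N` be the Lie algebra of
all matrices `X` with `⁅X, U⁆ ⊆ U`; it is conjugation-invariant as well. In `PSL₂(𝔽₇)` an element
of order `7` is conjugate to its square by an element `t` of order `3`. It lifts to a matrix `D`
which is diagonal in a suitable basis, with eigenvalues `ζ, ζ², ζ⁴` for a primitive seventh root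
of unity `ζ`. Since `{1, 2, 4}` is a perfect difference set modulo `7`, the conjugation by `D`
separates the matrix units. Hence `ad X` is a polynomial in `Ad D` for every diagonal `X`, so that
`N` contains the diagonal matrices, and each invariant space contains the matrix units `Eᵢⱼ` that
occur in its elements, `i ≠ j`. Now `N` contains a conjugate of `D` that is not diagonal, hence
some `Eᵢⱼ`; the action of `t`, which permutes the basis vectors cyclically, and Lie brackets
produce all others. So `N = 𝔤𝔩₃`, which makes `U` an ideal, and `𝔰𝔩₃` is simple.
-/

open scoped Pointwise
attribute [local instance] LieRing.ofAssociativeRing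

section LieStabilizer

variable {R L M : Type*} [CommRing R] [LieRing L] [LieAlgebra R L] [AddCommGroup M] [Module R M]
  [LieRingModule L M] [LieModule R L M]

variable (L) in
/-- The elements of the Lie algebra `L` whose action preserves a submodule `U` of a Lie module. It
is the infinitesimal counterpart of the stabilizer of `U`: it is all of `L` precisely when `U` is a
Lie submodule. -/
def lieStabilizer (U : Submodule R M) : LieSubalgebra R L where
  carrier := {x | ∀ m ∈ U, ⁅x, m⁆ ∈ U}
  zero_mem' m _ := by simp
  add_mem' hx hy m hm := by simpa only [add_lie] using U.add_mem (hx m hm) (hy m hm)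
  smul_mem' c x hx m hm := by simpa only [smul_lie] using U.smul_mem c (hx m hm)
  lie_mem' {x y} hx hy m hm := by
    simpa only [lie_lie] using U.sub_mem (hx _ (hy m hm)) (hy _ (hx m hm))

lemma mem_lieStabilizer {U : Submodule R M} {x : L} :
    x ∈ lieStabilizer L U ↔ ∀ m ∈ U, ⁅x, m⁆ ∈ U := Iff.rfl

end LieStabilizer

section ConjStabilizer

variable {R n : Type*} [CommRing R] [Fintype n] [DecidableEq n]

/-- The invertible matrices `g` for which conjugation `M ↦ g * M * g⁻¹` maps `U` onto itself,
encoded through the action of `ConjAct (GL n R)` on matrices. -/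
def conjStabilizer (U : Submodule R (Matrix n n R)) : Subgroup (GL n R) :=
  (MulAction.stabilizer (ConjAct (GL n R)) U).comap ConjAct.toConjAct.toMonoidHom

lemma mem_conjStabilizer {U : Submodule R (Matrix n n R)} {g : GL n R} :
    g ∈ conjStabilizer U ↔ ConjAct.toConjAct g • U = U := Iff.rfl

lemma conj_smul_eq (g : GL n R) (M : Matrix n n R) :
    ConjAct.toConjAct g • M = (g : Matrix n n R) * M * (g⁻¹ : GL n R) := rfl

lemma conj_mem_of_mem_conjStabilizer {U : Submodule R (Matrix n n R)} {g : GL n R}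
    (hg : g ∈ conjStabilizer U) {M : Matrix n n R} (hM : M ∈ U) :
    ConjAct.toConjAct g • M ∈ U := by
  rw [← mem_conjStabilizer.1 hg]
  exact Submodule.smul_mem_pointwise_smul _ _ _ hM

lemma center_le_conjStabilizer (U : Submodule R (Matrix n n R)) :
    Subgroup.center (GL n R) ≤ conjStabilizer U := by
  intro z hz
  obtain ⟨c, hc⟩ := GeneralLinearGroup.mem_center_iff_val_mem_range_scalar.1 hz
  have hfix (M : Matrix n n R) : ConjAct.toConjAct z • M = M := by
    rw [conj_smul_eq, ← hc, (scalar_commute c (Commute.all c) M).eq, hc, mul_assoc,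
      Units.mul_inv, mul_one]
  refine mem_conjStabilizer.2 (SetLike.coe_injective ?_)
  simp only [Submodule.coe_pointwise_smul, ← Set.image_smul, hfix, Set.image_id']

lemma conj_mem_conjStabilizer_smul {U : Submodule R (Matrix n n R)} {g : GL n R}
    (hg : g ∈ conjStabilizer U) (P : GL n R) :
    MulAut.conj P g ∈ conjStabilizer (ConjAct.toConjAct P • U) := by
  rw [mem_conjStabilizer] at hg ⊢
  rw [MulAut.conj_apply, smul_smul, ← map_mul, inv_mul_cancel_right, map_mul, mul_smul, hg]

lemma conj_smul_lie (g : ConjAct (GL n R)) (X Y : Matrix n n R) :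
    g • ⁅X, Y⁆ = ⁅g • X, g • Y⁆ := by
  simp only [Ring.lie_def, smul_sub, smul_mul']

lemma mem_conj_smul_iff_inv_smul_mem {g : ConjAct (GL n R)} {U : Submodule R (Matrix n n R)}
    {M : Matrix n n R} : M ∈ g • U ↔ g⁻¹ • M ∈ U := by
  rw [← SetLike.mem_coe, Submodule.coe_pointwise_smul, Set.mem_smul_set_iff_inv_smul_mem,
    SetLike.mem_coe]

lemma toSubmodule_lieStabilizer_smul (g : ConjAct (GL n R)) (U : Submodule R (Matrix n n R)) :
    (lieStabilizer (Matrix n n R) (g • U)).toSubmodule =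
      g • (lieStabilizer (Matrix n n R) U).toSubmodule := by
  ext X
  rw [mem_conj_smul_iff_inv_smul_mem, LieSubalgebra.mem_toSubmodule,
    LieSubalgebra.mem_toSubmodule, mem_lieStabilizer, mem_lieStabilizer]
  refine ⟨fun h Y hY => ?_, fun h Y hY => ?_⟩
  · have hmem := h (g • Y) (Submodule.smul_mem_pointwise_smul _ _ _ hY)
    rwa [mem_conj_smul_iff_inv_smul_mem, conj_smul_lie, inv_smul_smul] at hmem
  · rw [mem_conj_smul_iff_inv_smul_mem] at hY ⊢
    rw [conj_smul_lie]
    exact h _ hY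

lemma conjStabilizer_le_conjStabilizer_lieStabilizer (U : Submodule R (Matrix n n R)) :
    conjStabilizer U ≤
      conjStabilizer (lieStabilizer (Matrix n n R) U).toSubmodule := by
  intro g hg
  rw [mem_conjStabilizer, ← toSubmodule_lieStabilizer_smul, mem_conjStabilizer.1 hg]

end ConjStabilizer

section Hadamard

lemma hadamard_single_one {R m n : Type*} [CommSemiring R] [DecidableEq m] [DecidableEq n]
    (M : Matrix m n R) (i : m) (j : n) :
    M ⊙ single i j (1 : R) = M i j • single i j (1 : R) := by
  ext p q
  rw [hadamard_apply, Matrix.smul_apply, single_apply, smul_eq_mul]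
  split_ifs with h
  · rw [h.1, h.2]
  · rw [mul_zero, mul_zero]

lemma lie_diagonal_eq_hadamard {R n : Type*} [CommRing R] [Fintype n] [DecidableEq n] (w : n → R)
    (M : Matrix n n R) : ⁅diagonal w, M⁆ = of (fun i j => w i - w j) ⊙ M := by
  ext i j
  rw [Ring.lie_def, Matrix.sub_apply, diagonal_mul, mul_diagonal, hadamard_apply, of_apply]
  ring

-- By Lagrange interpolation, `B` is entrywise a polynomial in `A`.
lemma hadamard_mem_of_factors {K m n : Type*} [Field K] [Finite m] [Finite n]
    {U : Submodule K (Matrix m n K)} {A B : Matrix m n K}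
    (hA : ∀ M ∈ U, A ⊙ M ∈ U) (hAB : ∀ i j k l, A i j = A k l → B i j = B k l)
    {M : Matrix m n K} (hM : M ∈ U) : B ⊙ M ∈ U := by
  have hfactor : (Function.uncurry B).FactorsThrough (Function.uncurry A) :=
    fun p q h => hAB p.1 p.2 q.1 q.2 h
  have := Fintype.ofFinite (m × n)
  classical
  obtain ⟨f, hf⟩ : ∃ f : Polynomial K, ∀ i j, f.eval (A i j) = B i j := by
    let r : K → K := Function.extend (Function.uncurry A) (Function.uncurry B) 0
    refine ⟨Lagrange.interpolate (Finset.univ.image (Function.uncurry A)) id r, fun i j => ?_⟩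
    have hnode : A i j ∈ Finset.univ.image (Function.uncurry A) :=
      Finset.mem_image_of_mem (Function.uncurry A) (Finset.mem_univ (i, j))
    exact (Lagrange.eval_interpolate_at_node r Function.injective_id.injOn hnode).trans
      (hfactor.extend_apply 0 (i, j))
  have hpoly (f : Polynomial K) : (A.map fun a => f.eval a) ⊙ M ∈ U := by
    induction f using Polynomial.induction_on' with
    | add f g hf hg =>
      convert U.add_mem hf hg using 1
      ext i j
      simp only [hadamard_apply, map_apply, Polynomial.eval_add, add_mul, Matrix.add_apply]
    | monomial k c =>
      induction k with
      | zero =>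
        convert U.smul_mem c hM using 1
        ext i j
        simp
      | succ k ih =>
        convert hA _ ih using 1
        ext i j
        simp only [hadamard_apply, map_apply, Polynomial.eval_monomial, pow_succ]
        ring
  convert hpoly f using 2
  ext i j
  exact (hf i j).symm

end Hadamard

section Torus

variable {K n : Type*} [Field K]

/-- The ratios `μ i / μ j`, `i ≠ j`, by which the conjugation by `diagonal μ` scales the
off-diagonal matrix units, are pairwise distinct and different from `1`, the ratio for `i = j`. -/
def HasDistinctRatios (μ : n → K) : Prop :=
  ∀ i j k l, i ≠ j → μ i / μ j = μ k / μ l → i = k ∧ j = l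

variable [Fintype n] [DecidableEq n] {μ : n → K} {D : GL n K}
  {U : Submodule K (Matrix n n K)}

lemma conj_smul_eq_hadamard (hD : (D : Matrix n n K) = diagonal μ) (M : Matrix n n K) :
    ConjAct.toConjAct D • M = of (fun i j => μ i / μ j) ⊙ M := by
  have hμ (j : n) : μ j ≠ 0 := by
    have hdet := (isUnits_det_units D).ne_zero
    rw [hD, det_diagonal, Finset.prod_ne_zero_iff] at hdet
    exact hdet j (Finset.mem_univ j)
  rw [conj_smul_eq, Units.mul_inv_eq_iff_eq_mul, hD]
  ext i j
  rw [diagonal_mul, mul_diagonal, hadamard_apply, of_apply]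
  field_simp [hμ j]

lemma diagonal_mem_lieStabilizer (hD : (D : Matrix n n K) = diagonal μ)
    (hμ : HasDistinctRatios μ) (hDU : D ∈ conjStabilizer U) (w : n → K) :
    diagonal w ∈ lieStabilizer (Matrix n n K) U := by
  intro M hM
  rw [lie_diagonal_eq_hadamard]
  refine hadamard_mem_of_factors
    (fun M hM => conj_smul_eq_hadamard hD M ▸ conj_mem_of_mem_conjStabilizer hDU hM)
    (fun i j k l hratio => ?_) hM
  rw [of_apply, of_apply] at hratio ⊢
  by_cases hij : i = j
  · by_cases hkl : k = l
    · rw [hij, hkl, sub_self, sub_self]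
    · obtain ⟨rfl, rfl⟩ := hμ k l i j hkl hratio.symm
      rfl
  · obtain ⟨rfl, rfl⟩ := hμ i j k l hij hratio
    rfl

lemma single_mem_of_apply_ne_zero (hD : (D : Matrix n n K) = diagonal μ)
    (hμ : HasDistinctRatios μ) (hDU : D ∈ conjStabilizer U) {M : Matrix n n K} (hM : M ∈ U)
    {i j : n} (hij : i ≠ j) (hMij : M i j ≠ 0) : single i j (1 : K) ∈ U := by
  have hentry : single i j (1 : K) ⊙ M ∈ U := by
    refine hadamard_mem_of_factors
      (fun M hM => conj_smul_eq_hadamard hD M ▸ conj_mem_of_mem_conjStabilizer hDU hM)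
      (fun p q r s hratio => ?_) hM
    rw [of_apply, of_apply] at hratio
    have hiff : (i = p ∧ j = q) ↔ (i = r ∧ j = s) := by
      constructor
      · rintro ⟨rfl, rfl⟩
        exact hμ _ _ _ _ hij hratio
      · rintro ⟨rfl, rfl⟩
        exact hμ _ _ _ _ hij hratio.symm
    simp only [single_apply, hiff]
  rw [hadamard_comm, hadamard_single_one] at hentry
  exact (U.smul_mem_iff hMij).1 hentry

lemma single_mem_of_conj_eq_pow {T : GL n K} {k : ℕ} (hD : (D : Matrix n n K) = diagonal μ)
    (hμ : HasDistinctRatios μ) (hDU : D ∈ conjStabilizer U) (hTU : T ∈ conjStabilizer U)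
    (hTD : T * D * T⁻¹ = D ^ k) {e : n ≃ n} (he : ∀ p, μ p ^ k = μ (e p)) {i j : n} (hij : i ≠ j)
    (hmem : single i j (1 : K) ∈ U) : single (e.symm i) (e.symm j) (1 : K) ∈ U := by
  let E : Matrix n n K := single i j 1
  let X : Matrix n n K := ConjAct.toConjAct T • E
  have hDE : ConjAct.toConjAct D • E = (μ i / μ j) • E := by
    rw [conj_smul_eq_hadamard hD, hadamard_single_one, of_apply]
  have hDX : ConjAct.toConjAct (D ^ k) • X = (μ i / μ j) • X := by
    rw [← hTD]
    simp only [X, smul_smul, ← map_mul, inv_mul_cancel_right]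
    rw [map_mul, mul_smul, hDE, smul_comm]
  have hDk : ((D ^ k : GL n K) : Matrix n n K) = diagonal fun p => μ (e p) := by
    rw [Units.val_pow_eq_pow_val, hD, diagonal_pow]
    exact congrArg diagonal (funext he)
  have hX : X ≠ 0 := by
    simp only [X, E, ne_eq, smul_eq_zero_iff_eq]
    exact fun h => one_ne_zero ((single_apply_same i j (1 : K)).symm.trans (congrFun₂ h i j))
  obtain ⟨p, q, hpq⟩ : ∃ p q, X p q ≠ 0 := by
    by_contra! hzero
    exact hX (Matrix.ext hzero)
  have hratio : μ i / μ j = μ (e p) / μ (e q) := by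
    rw [conj_smul_eq_hadamard hDk] at hDX
    exact (mul_right_cancel₀ hpq (congrFun₂ hDX p q)).symm
  obtain ⟨rfl, rfl⟩ := hμ _ _ _ _ hij hratio
  rw [e.symm_apply_apply, e.symm_apply_apply]
  exact single_mem_of_apply_ne_zero hD hμ hDU (conj_mem_of_mem_conjStabilizer hTU hmem)
    (fun h => hij (congrArg e h)) hpq

end Torus

section MatrixUnits

variable {R n : Type*} [CommRing R] [Fintype n] [DecidableEq n]

lemma lieSubalgebra_eq_top_of_single_mem {N : LieSubalgebra R (Matrix n n R)}
    (hdiag : ∀ w, diagonal w ∈ N) (hsingle : ∀ i j, i ≠ j → single i j (1 : R) ∈ N) : N = ⊤ := by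
  refine eq_top_iff.2 fun M _ => ?_
  rw [matrix_eq_sum_single M]
  refine N.toSubmodule.sum_mem fun i _ => N.toSubmodule.sum_mem fun j _ => ?_
  rw [← mul_one (M i j), ← smul_eq_mul, ← smul_single]
  refine N.smul_mem _ ?_
  by_cases hij : i = j
  · rw [hij, ← diagonal_single]
    exact hdiag _
  · exact hsingle i j hij

lemma lie_single_single_of_ne {i k : n} (hik : i ≠ k) (j : n) :
    ⁅single i j (1 : R), single j k (1 : R)⁆ = single i k 1 := by
  rw [Ring.lie_def, single_mul_single_same, single_mul_single_of_ne _ _ _ _ hik.symm, mul_one,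
    sub_zero]

lemma lie_single_single_swap (i j : n) :
    ⁅single i j (1 : R), single j i (1 : R)⁆ = single i i 1 - single j j 1 := by
  rw [Ring.lie_def, single_mul_single_same, single_mul_single_same, mul_one]

lemma lie_single_lie_single {i j : n} (hij : i ≠ j) (M : Matrix n n R) :
    ⁅single j i (1 : R), ⁅single j i (1 : R), M⁆⁆ = (-2 * M i j) • single j i 1 := by
  have hsq : single j i (1 : R) * single j i 1 = 0 := single_mul_single_of_ne _ _ _ _ hij _
  have hmid : single j i (1 : R) * M * single j i 1 = M i j • single j i 1 := by
    rw [single_mul_mul_single, one_mul, mul_one, smul_single, smul_eq_mul, mul_one]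
  calc
    ⁅single j i (1 : R), ⁅single j i (1 : R), M⁆⁆
      = single j i 1 * single j i 1 * M - (2 : R) • (single j i 1 * M * single j i 1)
          + M * (single j i 1 * single j i 1) := by
        rw [Ring.lie_def, Ring.lie_def, two_smul]
        noncomm_ring
    _ = (-2 * M i j) • single j i 1 := by
        rw [hsq, hmid, zero_mul, mul_zero, zero_sub, add_zero, smul_smul, ← neg_smul, neg_mul]

lemma exists_apply_ne_zero_of_not_commute {M : Matrix n n R} {w : n → R}
    (h : ¬Commute M (diagonal w)) : ∃ i j, i ≠ j ∧ M i j ≠ 0 := by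
  by_contra! hoff
  refine h (Matrix.ext fun i j => ?_)
  by_cases hij : i = j
  · rw [mul_diagonal, diagonal_mul, hij, mul_comm]
  · rw [mul_diagonal, diagonal_mul, hoff i j hij, zero_mul, mul_zero]

lemma sub_single_trace_mem {I : LieIdeal R (Matrix n n R)}
    (hI : ∀ i j, i ≠ j → single i j (1 : R) ∈ I) (M : Matrix n n R) (k : n) :
    M - single k k M.trace ∈ I := by
  induction M using Matrix.induction_on' with
  | h_zero => simp
  | h_add M N hM hN =>
    rw [trace_add, single_add, add_sub_add_comm]
    exact I.add_mem hM hN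
  | h_std_basis i j x =>
    have hx (p q : n) : single p q x = x • single p q (1 : R) := by
      rw [smul_single, smul_eq_mul, mul_one]
    by_cases hij : i = j
    · subst hij
      rw [trace_single_eq_same, hx, hx, ← smul_sub]
      refine I.smul_mem x ?_
      by_cases hik : i = k
      · rw [hik, sub_self]
        exact I.zero_mem
      · rw [← lie_single_single_swap]
        exact I.lie_mem (hI k i (Ne.symm hik))
    · rw [trace_single_eq_of_ne _ _ _ hij, single_zero, sub_zero, hx]
      exact I.smul_mem x (hI i j hij)

end MatrixUnits

section LieIdeal

variable {K n : Type*} [Field K] [Fintype n] [DecidableEq n] {I : LieIdeal K (Matrix n n K)}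

lemma single_swap_mem_of_apply_ne_zero (h2 : (2 : K) ≠ 0) {M : Matrix n n K} (hM : M ∈ I)
    {i j : n} (hij : i ≠ j) (hMij : M i j ≠ 0) : single j i (1 : K) ∈ I := by
  have hmem : (-2 * M i j) • single j i (1 : K) ∈ I.toSubmodule := by
    rw [← lie_single_lie_single hij]
    exact I.lie_mem (I.lie_mem hM)
  exact (I.toSubmodule.smul_mem_iff (mul_ne_zero (neg_ne_zero.2 h2) hMij)).1 hmem

lemma single_mem_of_single_mem (h2 : (2 : K) ≠ 0) {i j : n} (hij : i ≠ j)
    (hmem : single i j (1 : K) ∈ I) {p q : n} (hpq : p ≠ q) : single p q (1 : K) ∈ I := by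
  have hcol {a b : n} (h : single a b (1 : K) ∈ I) {c : n} (hcb : c ≠ b) :
      single c b (1 : K) ∈ I :=
    lie_single_single_of_ne (R := K) hcb a ▸ I.lie_mem h
  have hrow {a b : n} (h : single a b (1 : K) ∈ I) {c : n} (hac : a ≠ c) :
      single a c (1 : K) ∈ I :=
    lie_single_single_of_ne (R := K) hac b ▸ lie_mem_left K _ I _ _ h
  by_cases hpj : p = j
  · have hswap : single j i (1 : K) ∈ I :=
      single_swap_mem_of_apply_ne_zero h2 hmem hij (by rw [single_apply_same]; exact one_ne_zero)
    exact hpj ▸ hrow hswap (hpj ▸ hpq)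
  · exact hrow (hcol hmem hpj) hpq

lemma exists_mem_apply_ne_zero (hn : (Fintype.card n : K) ≠ 0) {M : Matrix n n K} (hM : M ∈ I)
    (hM0 : M ≠ 0) (htr : M.trace = 0) : ∃ N ∈ I, ∃ i j, i ≠ j ∧ N i j ≠ 0 := by
  by_contra! hoff
  have hdiag (i j : n) : M j j = M i i := by
    by_cases hij : i = j
    · rw [hij]
    · have hentry := hoff _ (I.lie_mem (x := single i j (1 : K)) hM) i j hij
      rwa [Ring.lie_def, Matrix.sub_apply, single_mul_apply_same, mul_single_apply_same, one_mul,
        mul_one, sub_eq_zero] at hentry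
  have hzero (i : n) : M i i = 0 := by
    have hcard : (Fintype.card n : K) * M i i = 0 := by
      calc
        (Fintype.card n : K) * M i i = ∑ _j : n, M i i := by
          rw [Finset.sum_const, Finset.card_univ, nsmul_eq_mul]
        _ = M.trace := (Finset.sum_congr rfl fun j _ => hdiag i j).symm
        _ = 0 := htr
    exact (mul_eq_zero.1 hcard).resolve_left hn
  refine hM0 (Matrix.ext fun i j => ?_)
  by_cases hij : i = j
  · rw [← hij, hzero, Matrix.zero_apply]
  · exact hoff M hM i j hij

lemma lieIdeal_eq_bot_or_eq_ker_trace (h2 : (2 : K) ≠ 0) (hn : (Fintype.card n : K) ≠ 0)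
    (htr : I.toSubmodule ≤ LinearMap.ker (traceLinearMap n K K)) :
    I.toSubmodule = ⊥ ∨ I.toSubmodule = LinearMap.ker (traceLinearMap n K K) := by
  refine or_iff_not_imp_left.2 fun hbot => htr.antisymm fun M hM => ?_
  obtain ⟨A, hA, hA0⟩ := (Submodule.ne_bot_iff _).1 hbot
  obtain ⟨B, hB, i, j, hij, hBij⟩ := exists_mem_apply_ne_zero hn hA hA0 (htr hA)
  have hsingle (p q : n) (hpq : p ≠ q) : single p q (1 : K) ∈ I :=
    single_mem_of_single_mem h2 hij.symm (single_swap_mem_of_apply_ne_zero h2 hB hij hBij) hpq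
  have hMI := sub_single_trace_mem hsingle M i
  rwa [show M.trace = 0 from hM, single_zero, sub_zero] at hMI

end LieIdeal

section ThreeByThree

lemma rel_of_cyclic_of_trans {r : Fin 3 → Fin 3 → Prop}
    (hshift : ∀ i j, i ≠ j → r i j → r (i - 1) (j - 1))
    (htrans : ∀ i j k, i ≠ k → r i j → r j k → r i k)
    {i j : Fin 3} (hij : i ≠ j) (hr : r i j) {p q : Fin 3} (hpq : p ≠ q) : r p q := by
  have hr₁ : r (i - 1) (j - 1) := hshift i j hij hr
  have hr₂ : r (i - 2) (j - 2) := by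
    convert hshift _ _ (by simpa using hij) hr₁ using 1 <;> rw [sub_sub] <;> rfl
  have horbit (k : Fin 3) : r (i - k) (j - k) := by
    fin_cases k
    · simpa using hr
    · exact hr₁
    · exact hr₂
  have hstep (a : Fin 3) : r a (a + (j - i)) := by
    convert horbit (i - a) using 1 <;> abel
  have hcases : ∀ i j p q : Fin 3, i ≠ j → p ≠ q → q = p + (j - i) ∨ q = p + (j - i) + (j - i) := by
    decide
  obtain rfl | rfl := hcases i j p q hij hpq
  · exact hstep p
  · exact htrans p (p + (j - i)) _ hpq (hstep p) (hstep _)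

variable {K : Type*} [Field K] {μ : Fin 3 → K} {D T S : GL (Fin 3) K}
  {U : Submodule K (Matrix (Fin 3) (Fin 3) K)}

lemma lieStabilizer_eq_top (hD : (D : Matrix (Fin 3) (Fin 3) K) = diagonal μ)
    (hμ : HasDistinctRatios μ) (hsq : ∀ i, μ i ^ 2 = μ (i + 1)) (hDU : D ∈ conjStabilizer U)
    (hTU : T ∈ conjStabilizer U) (hSU : S ∈ conjStabilizer U) (hTD : T * D * T⁻¹ = D ^ 2)
    (hSD : ¬Commute (S * D * S⁻¹) D) :
    lieStabilizer (Matrix (Fin 3) (Fin 3) K) U = ⊤ := by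
  let N : LieSubalgebra K (Matrix (Fin 3) (Fin 3) K) := lieStabilizer _ U
  have hstab : conjStabilizer U ≤ conjStabilizer N.toSubmodule :=
    conjStabilizer_le_conjStabilizer_lieStabilizer U
  have hdiag (w : Fin 3 → K) : diagonal w ∈ N := diagonal_mem_lieStabilizer hD hμ hDU w
  have hSDN : ((S * D * S⁻¹ : GL (Fin 3) K) : Matrix (Fin 3) (Fin 3) K) ∈ N.toSubmodule :=
    conj_mem_of_mem_conjStabilizer (hstab hSU) (hD ▸ hdiag μ)
  obtain ⟨i, j, hij, hSDij⟩ : ∃ i j, i ≠ j ∧ (S * D * S⁻¹ : GL (Fin 3) K).val i j ≠ 0 := by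
    refine exists_apply_ne_zero_of_not_commute (w := μ) fun hcomm => hSD (Units.ext ?_)
    rw [← hD] at hcomm
    exact hcomm
  have hsingle : single i j (1 : K) ∈ N.toSubmodule :=
    single_mem_of_apply_ne_zero hD hμ (hstab hDU) hSDN hij hSDij
  have hshift (a b : Fin 3) (hab : a ≠ b) (hmem : single a b (1 : K) ∈ N) :
      single (a - 1) (b - 1) (1 : K) ∈ N := by
    have h := single_mem_of_conj_eq_pow (U := N.toSubmodule) hD hμ (hstab hDU) (hstab hTU) hTD
      (e := Equiv.addRight 1) hsq hab hmem
    simpa only [Equiv.addRight_symm, Equiv.coe_addRight, ← sub_eq_add_neg,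
      LieSubalgebra.mem_toSubmodule] using h
  have htrans (a b c : Fin 3) (hac : a ≠ c) (hab : single a b (1 : K) ∈ N)
      (hbc : single b c (1 : K) ∈ N) : single a c (1 : K) ∈ N :=
    lie_single_single_of_ne (R := K) hac b ▸ N.lie_mem hab hbc
  exact lieSubalgebra_eq_top_of_single_mem hdiag fun p q hpq =>
    rel_of_cyclic_of_trans (r := fun a b => single a b (1 : K) ∈ N) hshift htrans hij hsingle hpq

end ThreeByThree

section Spectrum

variable {K A : Type*} [Field K] [Ring A] [Algebra K A]

lemma exists_isPrimitiveRoot_mem_spectrum [IsAlgClosed K] [FiniteDimensional K A] {p : ℕ}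
    (hp : p.Prime) (hpK : (p : K) ≠ 0) {b : A} (hbp : b ^ p = 1) (hb : b ≠ 1) :
    ∃ ζ ∈ spectrum K b, IsPrimitiveRoot ζ p := by
  have : Nontrivial A := nontrivial_of_ne b 1 hb
  let Q : Polynomial K := ∑ k ∈ Finset.range p, Polynomial.X ^ k
  have hQb : Polynomial.aeval b Q * (b - 1) = 0 := by
    simp only [Q, map_sum, map_pow, Polynomial.aeval_X]
    rw [geom_sum_mul, hbp, sub_self]
  have hzero : (0 : K) ∈ spectrum K (Polynomial.aeval b Q) := by
    rw [spectrum.zero_mem_iff]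
    exact fun hunit => hb (sub_eq_zero.1 (hunit.mul_right_eq_zero.1 hQb))
  rw [spectrum.map_polynomial_aeval_of_nonempty b Q
    (spectrum.nonempty_of_isAlgClosed_of_finiteDimensional K b)] at hzero
  obtain ⟨ζ, hζ, hQζ⟩ := hzero
  have hgeom : ∑ k ∈ Finset.range p, ζ ^ k = 0 := by
    simpa [Q, Polynomial.eval_finsetSum] using hQζ
  have hζp : ζ ^ p = 1 := by
    rw [← sub_eq_zero, ← geom_sum_mul, hgeom, zero_mul]
  have hζ1 : ζ ≠ 1 := by
    rintro rfl
    simp only [one_pow, Finset.sum_const, Finset.card_range, nsmul_eq_mul, mul_one] at hgeom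
    exact hpK hgeom
  have : Fact p.Prime := ⟨hp⟩
  exact ⟨ζ, hζ, IsPrimitiveRoot.iff_orderOf.2 (orderOf_eq_prime hζp hζ1)⟩

lemma pow_mem_spectrum_of_conj_eq_pow {b t : Aˣ} {k : ℕ} (h : t * b * t⁻¹ = b ^ k) {ζ : K}
    (hζ : ζ ∈ spectrum K (b : A)) : ζ ^ k ∈ spectrum K (b : A) := by
  rw [← spectrum.units_conjugate (u := t), ← Units.val_mul, ← Units.val_mul, h,
    Units.val_pow_eq_pow_val]
  exact spectrum.pow_mem_pow _ _ hζ

lemma exists_conj_eq_diagonal {n : Type*} [Fintype n] [DecidableEq n] {B : GL n K} {μ : n → K}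
    (hμ : Function.Injective μ) (hspec : ∀ i, μ i ∈ spectrum K (B : Matrix n n K)) :
    ∃ P : GL n K, (MulAut.conj P B : Matrix n n K) = diagonal μ := by
  have heigen (i : n) : Module.End.HasEigenvalue (toLin' (B : Matrix n n K)) (μ i) := by
    rw [Module.End.hasEigenvalue_iff_mem_spectrum, spectrum_toLin']
    exact hspec i
  choose v hv using fun i => (heigen i).exists_hasEigenvector
  have hunit : IsUnit (of v)ᵀ := linearIndependent_cols_iff_isUnit.1
    (Module.End.eigenvectors_linearIndependent' _ μ hμ v hv)
  obtain ⟨Q, hQ⟩ := hunit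
  have hBQ : (B : Matrix n n K) * Q = Q * diagonal μ := by
    ext i j
    rw [hQ, mul_diagonal, mul_comm]
    exact congrFun (hv j).apply_eq_smul i
  refine ⟨Q⁻¹, ?_⟩
  rw [MulAut.conj_apply, inv_inv, mul_assoc, Units.val_mul, Units.val_mul, hBQ,
    Units.inv_mul_cancel_left]

end Spectrum

section Roots

variable {K : Type*} [Field K]

lemma HasDistinctRatios.injective {n : Type*} {μ : n → K} (hμ : HasDistinctRatios μ) :
    Function.Injective μ := by
  intro i j hij
  by_contra hne
  exact hne (hμ i j j i hne (by rw [hij])).1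

lemma sq_pow_two_pow_eq {ζ : K} (hζ : ζ ^ 7 = 1) (i : Fin 3) :
    (ζ ^ 2 ^ (i : ℕ)) ^ 2 = ζ ^ 2 ^ ((i + 1 : Fin 3) : ℕ) := by
  have h8 : ζ ^ 8 = ζ := by rw [pow_succ, hζ, one_mul]
  fin_cases i
  · simp
  · simp [← pow_mul]
  · simp [← pow_mul, h8]

-- `{1, 2, 4}` is a perfect difference set modulo `7`.
lemma hasDistinctRatios_pow_two_pow {ζ : K} (hζ : IsPrimitiveRoot ζ 7) :
    HasDistinctRatios fun i : Fin 3 => ζ ^ 2 ^ (i : ℕ) := by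
  have hdiff : ∀ i j k l : Fin 3, i ≠ j →
      2 ^ (i : ℕ) + 2 ^ (l : ℕ) ≡ 2 ^ (k : ℕ) + 2 ^ (j : ℕ) [MOD 7] → i = k ∧ j = l := by
    decide
  intro i j k l hij hratio
  have hζ0 : ζ ≠ 0 := hζ.ne_zero (by decide)
  rw [div_eq_div_iff (pow_ne_zero _ hζ0) (pow_ne_zero _ hζ0), ← pow_add, ← pow_add,
    (hζ.isOfFinOrder (by decide)).pow_eq_pow_iff_modEq, ← hζ.eq_orderOf] at hratio
  exact hdiff i j k l hij hratio

end Roots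

section GroupTheory

variable {H : Type*} [Group H] {b t : H}

lemma pow_pow_eq_self_of_conj_eq_pow {k m : ℕ} (h : t * b * t⁻¹ = b ^ k)
    (hcomm : Commute (t ^ m) b) : b ^ k ^ m = b := by
  have hconj (r : ℕ) : t ^ r * b * (t ^ r)⁻¹ = b ^ k ^ r := by
    induction r with
    | zero => simp
    | succ r ih =>
      calc
        t ^ (r + 1) * b * (t ^ (r + 1))⁻¹ = t * (t ^ r * b * (t ^ r)⁻¹) * t⁻¹ := by
          rw [pow_succ']
          group
        _ = b ^ k ^ (r + 1) := by rw [ih, ← conj_pow, h, ← pow_mul, pow_succ']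
  rw [← hconj, hcomm.eq, mul_inv_cancel_right]

-- A scalar correction `z` of `b` enters the left side linearly but the right side quadratically.
lemma exists_mem_center_conj_eq_sq
    (h : ((t * b * t⁻¹ : H) : H ⧸ Subgroup.center H) = (b ^ 2 : H)) :
    ∃ z ∈ Subgroup.center H, t * (b * z) * t⁻¹ = (b * z) ^ 2 := by
  refine ⟨(b ^ 2)⁻¹ * (t * b * t⁻¹), QuotientGroup.eq.1 h.symm, ?_⟩
  set z := (b ^ 2)⁻¹ * (t * b * t⁻¹) with hz
  have hcentral (x : H) : x * z = z * x :=
    Subgroup.mem_center_iff.1 (QuotientGroup.eq.1 h.symm) x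
  have htb : t * b * t⁻¹ = b ^ 2 * z := by rw [hz, mul_inv_cancel_left]
  calc
    t * (b * z) * t⁻¹ = t * b * t⁻¹ * z := by
      rw [mul_assoc (t * b) t⁻¹ z, hcentral t⁻¹]
      simp only [mul_assoc]
    _ = b ^ 2 * z ^ 2 := by rw [htb, mul_assoc, pow_two z]
    _ = (b * z) ^ 2 := (Commute.mul_pow (hcentral b) 2).symm

end GroupTheory

section SevenTorsion

variable {K : Type*} [Field K] [IsAlgClosed K] {U : Submodule K (Matrix (Fin 3) (Fin 3) K)}
  {b t s : GL (Fin 3) K}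

lemma exists_conj_eq_diagonal_of_conj_eq_sq (h7 : (7 : K) ≠ 0) (htb : t * b * t⁻¹ = b ^ 2)
    (ht : Commute (t ^ 3) b) (hb : b ≠ 1) :
    ∃ (ζ : K) (P : GL (Fin 3) K), IsPrimitiveRoot ζ 7 ∧
      (MulAut.conj P b : Matrix (Fin 3) (Fin 3) K) = diagonal fun i : Fin 3 => ζ ^ 2 ^ (i : ℕ) := by
  have hb8 : b ^ 7 * b = b := by
    rw [← pow_succ]
    exact pow_pow_eq_self_of_conj_eq_pow htb ht
  have hb7 : (b : Matrix (Fin 3) (Fin 3) K) ^ 7 = 1 := by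
    rw [← Units.val_pow_eq_pow_val, mul_eq_right.1 hb8, Units.val_one]
  obtain ⟨ζ, hζb, hζ⟩ := exists_isPrimitiveRoot_mem_spectrum (K := K) Nat.prime_seven
    (by exact_mod_cast h7) hb7 (fun h => hb (Units.ext h))
  have hspec (i : ℕ) : ζ ^ 2 ^ i ∈ spectrum K (b : Matrix (Fin 3) (Fin 3) K) := by
    induction i with
    | zero => rwa [pow_zero, pow_one]
    | succ i ih =>
      rw [pow_succ, pow_mul]
      exact pow_mem_spectrum_of_conj_eq_pow htb ih
  obtain ⟨P, hP⟩ := exists_conj_eq_diagonal (hasDistinctRatios_pow_two_pow hζ).injective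
    fun i => hspec i
  exact ⟨ζ, P, hζ, hP⟩

lemma lieStabilizer_eq_top_of_mem_conjStabilizer (h7 : (7 : K) ≠ 0) (hbU : b ∈ conjStabilizer U)
    (htU : t ∈ conjStabilizer U) (hsU : s ∈ conjStabilizer U) (htb : t * b * t⁻¹ = b ^ 2)
    (ht : Commute (t ^ 3) b) (hsb : ¬Commute (s * b * s⁻¹) b) :
    lieStabilizer (Matrix (Fin 3) (Fin 3) K) U = ⊤ := by
  have hb : b ≠ 1 := by
    rintro rfl
    exact hsb (Commute.one_right _)
  obtain ⟨ζ, P, hζ, hP⟩ := exists_conj_eq_diagonal_of_conj_eq_sq h7 htb ht hb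
  have htop : lieStabilizer (Matrix (Fin 3) (Fin 3) K) (ConjAct.toConjAct P • U) = ⊤ := by
    refine lieStabilizer_eq_top hP (hasDistinctRatios_pow_two_pow hζ)
      (sq_pow_two_pow_eq hζ.pow_eq_one) (conj_mem_conjStabilizer_smul hbU P)
      (conj_mem_conjStabilizer_smul htU P) (conj_mem_conjStabilizer_smul hsU P) ?_ ?_
    · rw [← map_inv, ← map_mul, ← map_mul, htb, map_pow]
    · rw [← map_inv, ← map_mul, ← map_mul]
      exact fun h => hsb (h.of_map (MulAut.conj P).injective)
  refine eq_top_iff.2 fun X _ => ?_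
  rw [← LieSubalgebra.mem_toSubmodule, ← inv_smul_smul (ConjAct.toConjAct P) X,
    ← mem_conj_smul_iff_inv_smul_mem, ← toSubmodule_lieStabilizer_smul, htop]
  exact Submodule.mem_top

end SevenTorsion

section Representation

variable {G : Type*} [Group G]

lemma range_le_conjStabilizer {R n : Type*} [CommRing R] [Fintype n] [DecidableEq n]
    {ρ : G →* GL n R} {U : Submodule R (Matrix n n R)}
    (hU : ∀ g, ∀ M ∈ U, (ρ g : Matrix n n R) * M * ((ρ g)⁻¹ : GL n R) ∈ U) :
    ρ.range ≤ conjStabilizer U := by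
  rintro _ ⟨g, rfl⟩
  rw [mem_conjStabilizer]
  refine le_antisymm (fun M hM => ?_) fun M hM => ?_
  · rw [mem_conj_smul_iff_inv_smul_mem, ← map_inv, conj_smul_eq] at hM
    rw [← smul_inv_smul (ConjAct.toConjAct (ρ g)) M]
    exact hU g _ hM
  · rw [mem_conj_smul_iff_inv_smul_mem, ← map_inv, ← map_inv]
    exact hU g⁻¹ M hM

lemma lieStabilizer_eq_top_of_mem_projImage {ρ : G →* GL (Fin 3) ℂ}
    {U : Submodule ℂ (Matrix (Fin 3) (Fin 3) ℂ)} (hU : ρ.range ≤ conjStabilizer U)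
    {u t s : projImage ρ} (htu : t * u * t⁻¹ = u ^ 2) (ht : t ^ 3 = 1)
    (hsu : ¬Commute (s * u * s⁻¹) u) :
    lieStabilizer (Matrix (Fin 3) (Fin 3) ℂ) U = ⊤ := by
  obtain ⟨_, gu, rfl⟩ := u
  obtain ⟨_, gt, rfl⟩ := t
  obtain ⟨_, gs, rfl⟩ := s
  obtain ⟨z, hz, htb⟩ := exists_mem_center_conj_eq_sq (congrArg Subtype.val htu)
  refine lieStabilizer_eq_top_of_mem_conjStabilizer (b := ρ gu * z) (t := ρ gt) (s := ρ gs)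
    (by norm_num) (mul_mem (hU ⟨gu, rfl⟩) (center_le_conjStabilizer U hz)) (hU ⟨gt, rfl⟩)
    (hU ⟨gs, rfl⟩) htb ?_ fun hcomm => ?_
  · have hcentral : ρ gt ^ 3 ∈ Subgroup.center (GL (Fin 3) ℂ) :=
      (QuotientGroup.eq_one_iff _).1 (congrArg Subtype.val ht)
    exact (Subgroup.mem_center_iff.1 hcentral _).symm
  · have hquot := hcomm.map (QuotientGroup.mk' (Subgroup.center (GL (Fin 3) ℂ)))
    have hz1 : QuotientGroup.mk' (Subgroup.center (GL (Fin 3) ℂ)) z = 1 :=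
      (QuotientGroup.eq_one_iff z).2 hz
    simp only [map_mul, map_inv, hz1, mul_one] at hquot
    exact hsu (Subtype.ext hquot)

end Representation

lemma exists_conj_eq_sq_projectiveSpecialLinearGroup :
    ∃ u t s : ProjectiveSpecialLinearGroup (Fin 2) (ZMod 7),
      t * u * t⁻¹ = u ^ 2 ∧ t ^ 3 = 1 ∧ ¬Commute (s * u * s⁻¹) u := by
  let u : SpecialLinearGroup (Fin 2) (ZMod 7) := ⟨!![1, 1; 0, 1], by decide⟩
  let t : SpecialLinearGroup (Fin 2) (ZMod 7) := ⟨!![4, 0; 0, 2], by decide⟩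
  let s : SpecialLinearGroup (Fin 2) (ZMod 7) := ⟨!![0, 1; -1, 0], by decide⟩
  have htu : t * u * t⁻¹ = u ^ 2 := by decide
  have ht : t ^ 3 = 1 := by decide
  have hsu : (s * u * s⁻¹ * u)⁻¹ * (u * (s * u * s⁻¹)) ∉
      Subgroup.center (SpecialLinearGroup (Fin 2) (ZMod 7)) := by
    rw [Matrix.SpecialLinearGroup.mem_center_iff]
    decide
  let π := QuotientGroup.mk' (Subgroup.center (SpecialLinearGroup (Fin 2) (ZMod 7)))
  refine ⟨π u, π t, π s, ?_, ?_, fun hcomm => hsu (QuotientGroup.eq.1 hcomm.eq)⟩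
  · rw [← map_inv, ← map_mul, ← map_mul, htu, map_pow]
  · rw [← map_pow, ht, map_one]

lemma ker_trace_ne_bot {R n : Type*} [CommRing R] [Nontrivial R] [Fintype n] [Nontrivial n] :
    LinearMap.ker (traceLinearMap n R R) ≠ ⊥ := by
  classical
  obtain ⟨i, j, hij⟩ := exists_pair_ne n
  refine (Submodule.ne_bot_iff _).2 ⟨single i j 1, trace_single_eq_of_ne i j 1 hij, fun h => ?_⟩
  exact one_ne_zero ((single_apply_same i j (1 : R)).symm.trans (congrFun₂ h i j))

theorem matAdIrreducible_of_projImage_PSL27_general {G : Type*} [Group G]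
    (ρ : G →* GL (Fin 3) ℂ)
    (hPSL : Nonempty (projImage ρ ≃* ProjectiveSpecialLinearGroup (Fin 2) (ZMod 7))) :
    MatAdIrreducible ρ := by
  obtain ⟨e⟩ := hPSL
  obtain ⟨u, t, s, htu, ht, hsu⟩ := exists_conj_eq_sq_projectiveSpecialLinearGroup
  refine ⟨ker_trace_ne_bot, fun U htr hU => ?_⟩
  have htop : lieStabilizer (Matrix (Fin 3) (Fin 3) ℂ) U = ⊤ := by
    refine lieStabilizer_eq_top_of_mem_projImage (range_le_conjStabilizer hU) (u := e.symm u)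
      (t := e.symm t) (s := e.symm s) ?_ ?_ ?_
    · rw [← map_inv, ← map_mul, ← map_mul, htu, map_pow]
    · rw [← map_pow, ht, map_one]
    · rw [← map_inv, ← map_mul, ← map_mul]
      exact fun h => hsu (h.of_map e.symm.injective)
  let I : LieIdeal ℂ (Matrix (Fin 3) (Fin 3) ℂ) :=
    { U with lie_mem := fun {X M} hM => mem_lieStabilizer.1 (htop ▸ LieSubalgebra.mem_top X) M hM }
  exact lieIdeal_eq_bot_or_eq_ker_trace (I := I) two_ne_zero (by norm_num) htr

/-- Let `ρ : G → GL₃(ℂ)` be an irreducible 3-dimensional representation of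
a finite group whose projective image in `PGL₃(ℂ)` is isomorphic to `PSL₂(𝔽₇)`. Then
`Ad ρ`, the 8-dimensional conjugation representation on trace-zero `3 × 3` matrices,
is irreducible. -/
theorem matAdIrreducible_of_projImage_PSL27
    {G : Type*} [Group G] [Finite G] (ρ : G →* GL (Fin 3) ℂ)
    (hirr : MatIrreducible ρ)
    (hPSL : Nonempty (projImage ρ ≃* Matrix.ProjectiveSpecialLinearGroup (Fin 2) (ZMod 7))) :
    MatAdIrreducible ρ :=
  matAdIrreducible_of_projImage_PSL27_general ρ hPSL
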